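/- arXiv:2312.07257 — 3 statements merged into one kernel-verified Lean document; each statement's English description precedes it below -/
import Mathlib

section
/- Let H and K be complex Hilbert spaces, let T ∈ B(H,K), and let α ∈ (0,1). Then there exists U ∈ B(H,K) such that: (i) T = U ∘ |T|^α and T* = U* ∘ |T*|^α; (ii) U*U = |T|^{2(1−α)} and UU* = |T*|^{2(1−α)}; (iii) U ∘ |T|^β = |T*|^β ∘ U for every real β > 0. -/
/-- `|T|^α = (T*T)^{α/2}` defined via the continuous functional calculus. -/
noncomputable def absPow {H K : Type*} [NormedAddCommGroup H] [InnerProductSpace ℂ H]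
    [NormedAddCommGroup K] [InnerProductSpace ℂ K] [CompleteSpace H] [CompleteSpace K]
    (T : H →L[ℂ] K) (α : ℝ) : H →L[ℂ] H :=
  CFC.rpow ((ContinuousLinearMap.adjoint T).comp T) (α / 2)

open ContinuousLinearMap Filter Topology in
theorem gpd_norm_cfc_le {H : Type*} [NormedAddCommGroup H] [InnerProductSpace ℂ H] [CompleteSpace H]
    (A : H →L[ℂ] H) (hA : 0 ≤ A) (f : ℝ → ℝ) (c : ℝ) (hc : 0 ≤ c)
    (h : ∀ x : ℝ, 0 ≤ x → x ≤ ‖A‖ → |f x| ≤ c) : ‖cfc f A‖ ≤ c := by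
  refine norm_cfc_le hc ?_
  intro x hx
  have h0 : 0 ≤ x := spectrum_nonneg_of_nonneg hA hx
  refine h x h0 ?_
  have : Nontrivial (H →L[ℂ] H) := by
    by_contra hN
    rw [not_nontrivial_iff_subsingleton] at hN
    rw [spectrum.of_subsingleton] at hx
    exact hx
  have := spectrum.norm_le_norm_of_mem hx
  rwa [Real.norm_of_nonneg h0] at this

theorem gpd_nonneg {H K : Type*} [NormedAddCommGroup H] [InnerProductSpace ℂ H] [CompleteSpace H]
    [NormedAddCommGroup K] [InnerProductSpace ℂ K] [CompleteSpace K]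
    (T : H →L[ℂ] K) : 0 ≤ (ContinuousLinearMap.adjoint T).comp T := by
  rw [ContinuousLinearMap.nonneg_iff_isPositive]
  exact ContinuousLinearMap.isPositive_adjoint_comp_self T

theorem gpd_poly {H K : Type*} [NormedAddCommGroup H] [InnerProductSpace ℂ H]
    [NormedAddCommGroup K] [InnerProductSpace ℂ K]
    (T : H →L[ℂ] K) (A : H →L[ℂ] H) (B : K →L[ℂ] K) (h : T.comp A = B.comp T)
    (p : Polynomial ℝ) :
    T.comp (Polynomial.aeval A p) = (Polynomial.aeval B p).comp T := by
  induction p using Polynomial.induction_on' with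
  | add p q hp hq => simp [ContinuousLinearMap.comp_add, ContinuousLinearMap.add_comp, hp, hq]
  | monomial n a =>
    have key : T.comp (A ^ n) = (B ^ n).comp T := by
      induction n with
      | zero => ext; simp
      | succ n ih =>
        rw [pow_succ, pow_succ]
        change (T.comp (A ^ n)).comp A = ((B ^ n).comp (B.comp T))
        rw [ih, ← h]; rfl
    rw [Polynomial.aeval_monomial, Polynomial.aeval_monomial, ← Algebra.smul_def,
      ← Algebra.smul_def]
    ext x
    have := congrArg (fun S => S x) key
    simp only [ContinuousLinearMap.comp_apply] at this
    have h1 := T.map_smul_of_tower a ((A ^ n) x)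
    simp only [ContinuousLinearMap.comp_apply, smul_apply, ← this]
    exact h1

theorem gpd_intertwine {H K : Type*} [NormedAddCommGroup H] [InnerProductSpace ℂ H]
    [CompleteSpace H]
    [NormedAddCommGroup K] [InnerProductSpace ℂ K] [CompleteSpace K]
    (T : H →L[ℂ] K) (A : H →L[ℂ] H) (B : K →L[ℂ] K) (hA : 0 ≤ A) (hB : 0 ≤ B)
    (h : T.comp A = B.comp T) (f : ℝ → ℝ) (hf : Continuous f) :
    T.comp (cfc f A) = (cfc f B).comp T := by
  have hAs : IsSelfAdjoint A := .of_nonneg hA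
  have hBs : IsSelfAdjoint B := .of_nonneg hB
  rw [← sub_eq_zero, ← norm_le_zero_iff]
  refine le_of_forall_pos_le_add fun ε hε => ?_
  set δ := ε / (2 * (‖T‖ + 1)) with hδ
  have hT : 0 ≤ ‖T‖ := norm_nonneg T
  have hδ0 : 0 < δ := by positivity
  obtain ⟨p, hp⟩ := exists_polynomial_near_of_continuousOn 0 (max ‖A‖ ‖B‖) f hf.continuousOn δ hδ0
  have e1 : ‖cfc f A - Polynomial.aeval A p‖ ≤ δ := by
    rw [← cfc_polynomial p A, ← cfc_sub f p.eval A]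
    refine gpd_norm_cfc_le A hA _ _ hδ0.le fun x h0 h1 => ?_
    rw [abs_sub_comm]
    exact (hp x ⟨h0, h1.trans (le_max_left _ _)⟩).le
  have e2 : ‖cfc f B - Polynomial.aeval B p‖ ≤ δ := by
    rw [← cfc_polynomial p B, ← cfc_sub f p.eval B]
    refine gpd_norm_cfc_le B hB _ _ hδ0.le fun x h0 h1 => ?_
    rw [abs_sub_comm]
    exact (hp x ⟨h0, h1.trans (le_max_right _ _)⟩).le
  have e3 : T.comp (cfc f A) - (cfc f B).comp T =
      T.comp (cfc f A - Polynomial.aeval A p) - (cfc f B - Polynomial.aeval B p).comp T := by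
    rw [ContinuousLinearMap.comp_sub, ContinuousLinearMap.sub_comp, gpd_poly T A B h p]; abel
  rw [e3]
  calc _ ≤ ‖T‖ * δ + δ * ‖T‖ := by
        refine (norm_sub_le _ _).trans (add_le_add ?_ ?_)
        · exact (ContinuousLinearMap.opNorm_comp_le _ _).trans (by gcongr)
        · exact (ContinuousLinearMap.opNorm_comp_le _ _).trans (by gcongr)
    _ ≤ 0 + ε := by
        have : δ * (2 * (‖T‖ + 1)) = ε := by rw [hδ]; field_simp
        nlinarith

theorem gpd_norm_comp {H K : Type*} [NormedAddCommGroup H] [InnerProductSpace ℂ H]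
    [CompleteSpace H]
    [NormedAddCommGroup K] [InnerProductSpace ℂ K] [CompleteSpace K]
    (T : H →L[ℂ] K) (f : ℝ → ℝ) (hf : Continuous f) :
    (ContinuousLinearMap.adjoint (T.comp (cfc f ((ContinuousLinearMap.adjoint T).comp T)))).comp
      (T.comp (cfc f ((ContinuousLinearMap.adjoint T).comp T)))
      = cfc (fun x => x * f x ^ 2) ((ContinuousLinearMap.adjoint T).comp T) := by
  have hA := gpd_nonneg T
  set A := (ContinuousLinearMap.adjoint T).comp T with hAdef
  have hAs : IsSelfAdjoint A := .of_nonneg hA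
  have hs : ContinuousLinearMap.adjoint (cfc f A) = cfc f A :=
    (cfc_predicate f A : IsSelfAdjoint _)
  rw [ContinuousLinearMap.adjoint_comp, hs]
  have : (fun x : ℝ => x * f x ^ 2) = fun x => f x * (x * f x) := by ext; ring
  rw [this, cfc_mul f (fun x => x * f x) A, cfc_mul (fun x => x) f A, cfc_id' ℝ A]
  rfl

theorem gpd_norm_le {H K : Type*} [NormedAddCommGroup H] [InnerProductSpace ℂ H]
    [CompleteSpace H]
    [NormedAddCommGroup K] [InnerProductSpace ℂ K] [CompleteSpace K]
    (T : H →L[ℂ] K) (f : ℝ → ℝ) (hf : Continuous f) (c : ℝ) (hc : 0 ≤ c)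
    (h : ∀ x : ℝ, 0 ≤ x → x * f x ^ 2 ≤ c) :
    ‖T.comp (cfc f ((ContinuousLinearMap.adjoint T).comp T))‖ ≤ √c := by
  apply Real.le_sqrt_of_sq_le
  rw [sq, ← ContinuousLinearMap.norm_adjoint_comp_self, gpd_norm_comp T f hf]
  refine gpd_norm_cfc_le _ (gpd_nonneg T) _ _ hc fun x h0 _ => ?_
  rw [abs_of_nonneg (by positivity)]
  exact h x h0

/-- Regularised negative power. -/
noncomputable def gpdG (p e x : ℝ) : ℝ := (max x e) ^ (-p)

theorem gpdG_cont (p e : ℝ) (he : 0 < e) : Continuous (gpdG p e) := by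
  unfold gpdG
  refine (continuous_id.max continuous_const).rpow_const fun x => Or.inl ?_
  exact (lt_max_of_lt_right he).ne'

theorem gpdG_nonneg (p e x : ℝ) (he : 0 < e) : 0 ≤ gpdG p e x :=
  Real.rpow_nonneg (he.le.trans (le_max_right _ _)) _

theorem gpdG_of_le (p e x : ℝ) (h : e ≤ x) : gpdG p e x = x ^ (-p) := by
  rw [gpdG, max_eq_left h]

theorem gpdG_le (p e x : ℝ) (hp : 0 ≤ p) (hx : 0 < x) : gpdG p e x ≤ x ^ (-p) :=
  Real.rpow_le_rpow_of_nonpos hx (le_max_left _ _) (by linarith)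

theorem gpd_rpow_aux (p x : ℝ) (hx : 0 < x) : x * (x ^ (-p)) ^ 2 = x ^ (1 - 2 * p) := by
  rw [← Real.rpow_natCast, ← Real.rpow_mul hx.le]
  nth_rewrite 1 [← Real.rpow_one x]
  rw [← Real.rpow_add hx]; congr 1; push_cast; ring

theorem gpdG_est_cauchy (p e1 e2 e x : ℝ) (hp : 0 ≤ p) (hp2 : 2 * p < 1) (he1 : 0 < e1)
    (he2 : 0 < e2) (h1 : e1 ≤ e) (h2 : e2 ≤ e) (hx : 0 ≤ x) :
    x * (gpdG p e1 x - gpdG p e2 x) ^ 2 ≤ e ^ (1 - 2 * p) := by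
  have hr : 0 ≤ e ^ (1 - 2 * p) := Real.rpow_nonneg (he1.le.trans h1) _
  rcases le_total e x with h | h
  · rw [gpdG_of_le _ _ _ (h1.trans h), gpdG_of_le _ _ _ (h2.trans h)]; simpa
  rcases hx.eq_or_lt with rfl | hx
  · simpa
  refine le_trans ?_ (Real.rpow_le_rpow hx.le h (by linarith : 0 ≤ 1 - 2 * p))
  rw [← gpd_rpow_aux p x hx]
  refine mul_le_mul_of_nonneg_left ?_ hx.le
  have a1 := gpdG_nonneg p e1 x he1
  have a2 := gpdG_nonneg p e2 x he2
  have b1 := gpdG_le p e1 x hp hx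
  have b2 := gpdG_le p e2 x hp hx
  apply sq_le_sq'
  all_goals linarith

theorem gpdG_est_sq (p e x : ℝ) (hp : 0 ≤ p) (hp2 : 2 * p < 1) (he : 0 < e) (hx : 0 ≤ x) :
    |x * gpdG p e x ^ 2 - x ^ (1 - 2 * p)| ≤ e ^ (1 - 2 * p) := by
  have hr : 0 ≤ e ^ (1 - 2 * p) := Real.rpow_nonneg he.le _
  rcases hx.eq_or_lt with rfl | hx
  · rw [Real.zero_rpow (by linarith)]; simpa
  rcases le_total e x with h | h
  · rw [gpdG_of_le _ _ _ h, gpd_rpow_aux p x hx]; simpa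
  have h3 := Real.rpow_le_rpow hx.le h (by linarith : 0 ≤ 1 - 2 * p)
  have a := gpdG_nonneg p e x he
  have b := gpdG_le p e x hp hx
  have c : x * gpdG p e x ^ 2 ≤ x * (x ^ (-p)) ^ 2 := by gcongr
  rw [gpd_rpow_aux p x hx] at c
  have d : 0 ≤ x * gpdG p e x ^ 2 := by positivity
  rw [abs_le]; constructor <;> linarith

theorem gpdG_est_one (p e x : ℝ) (hp : 0 ≤ p) (he : 0 < e) (hx : 0 ≤ x) :
    x * (gpdG p e x * x ^ p - 1) ^ 2 ≤ e := by
  rcases hx.eq_or_lt with rfl | hx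
  · simpa using he.le
  have h1 : x ^ (-p) * x ^ p = 1 := by rw [← Real.rpow_add hx]; simp
  rcases le_total e x with h | h
  · rw [gpdG_of_le _ _ _ h, h1]; simpa using he.le
  have a := gpdG_nonneg p e x he
  have b := gpdG_le p e x hp hx
  have hq : 0 ≤ x ^ p := Real.rpow_nonneg hx.le _
  have c : gpdG p e x * x ^ p ≤ 1 := by rw [← h1]; gcongr
  have d : 0 ≤ gpdG p e x * x ^ p := by positivity
  have : (gpdG p e x * x ^ p - 1) ^ 2 ≤ 1 := by nlinarith
  nlinarith

open Filter Topology in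
theorem gpd_sq_tendsto {H : Type*} [NormedAddCommGroup H] [InnerProductSpace ℂ H]
    [CompleteSpace H] (A : H →L[ℂ] H) (hA : 0 ≤ A) (p : ℝ) (hp : 0 ≤ p) (hp2 : 2 * p < 1)
    (e : ℕ → ℝ) (he : ∀ n, 0 < e n) (hlim : Tendsto e atTop (𝓝 0)) :
    Tendsto (fun n => cfc (fun x => x * gpdG p (e n) x ^ 2) A) atTop
      (𝓝 (cfc (fun x : ℝ => x ^ (1 - 2 * p)) A)) := by
  have hAs : IsSelfAdjoint A := .of_nonneg hA
  rw [tendsto_iff_norm_sub_tendsto_zero]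
  have hl : Tendsto (fun n => e n ^ (1 - 2 * p)) atTop (𝓝 0) := by
    have := hlim.rpow_const (p := 1 - 2 * p) (Or.inr (by linarith))
    rwa [Real.zero_rpow (by linarith)] at this
  refine squeeze_zero (fun _ => norm_nonneg _) (fun n => ?_) hl
  have hc1 := gpdG_cont p (e n) (he n)
  have hc2 : Continuous (fun x : ℝ => x ^ (1 - 2 * p)) :=
    Real.continuous_rpow_const (by linarith)
  rw [← cfc_sub (fun x => x * gpdG p (e n) x ^ 2) (fun x : ℝ => x ^ (1 - 2 * p)) A]
  exact gpd_norm_cfc_le A hA _ _ (Real.rpow_nonneg (he n).le _)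
    fun x h0 _ => gpdG_est_sq p _ x hp hp2 (he n) h0

open Filter Topology in
theorem gpd_tendsto_comp {E F G : Type*} [NormedAddCommGroup E] [InnerProductSpace ℂ E]
    [NormedAddCommGroup F] [InnerProductSpace ℂ F] [NormedAddCommGroup G] [InnerProductSpace ℂ G]
    {a : ℕ → F →L[ℂ] G} {b : ℕ → E →L[ℂ] F} {a0 : F →L[ℂ] G} {b0 : E →L[ℂ] F}
    (ha : Tendsto a atTop (𝓝 a0)) (hb : Tendsto b atTop (𝓝 b0)) :
    Tendsto (fun n => (a n).comp (b n)) atTop (𝓝 (a0.comp b0)) := by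
  have hc : Continuous (fun q : (F →L[ℂ] G) × (E →L[ℂ] F) => q.1.comp q.2) :=
    continuous_fst.clm_comp continuous_snd
  exact (hc.tendsto (a0, b0)).comp (ha.prodMk_nhds hb)

set_option maxHeartbeats 2000000 in
open Filter Topology in
/-- The generalized polar decomposition (Hilbert-space case of Theorem 3.1). -/
theorem generalized_polar_decomposition
    {H K : Type*} [NormedAddCommGroup H] [InnerProductSpace ℂ H] [CompleteSpace H]
    [NormedAddCommGroup K] [InnerProductSpace ℂ K] [CompleteSpace K]
    (T : H →L[ℂ] K) (α : ℝ) (hα : α ∈ Set.Ioo (0 : ℝ) 1) :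
    ∃ U : H →L[ℂ] K,
      T = U.comp (absPow T α) ∧
      ContinuousLinearMap.adjoint T =
        (ContinuousLinearMap.adjoint U).comp (absPow (ContinuousLinearMap.adjoint T) α) ∧
      (ContinuousLinearMap.adjoint U).comp U = absPow T (2 * (1 - α)) ∧
      U.comp (ContinuousLinearMap.adjoint U) =
        absPow (ContinuousLinearMap.adjoint T) (2 * (1 - α)) ∧
      ∀ β : ℝ, 0 < β →
        U.comp (absPow T β) = (absPow (ContinuousLinearMap.adjoint T) β).comp U := by
  obtain ⟨hα0, hα1⟩ := hα
  have hA := gpd_nonneg T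
  have hB := gpd_nonneg (ContinuousLinearMap.adjoint T)
  have hpA : ∀ β, absPow T β
      = cfc (fun x : ℝ => x ^ (β / 2)) ((ContinuousLinearMap.adjoint T).comp T) :=
    fun β => CFC.rpow_eq_cfc_real hA
  have hpB : ∀ β, absPow (ContinuousLinearMap.adjoint T) β
      = cfc (fun x : ℝ => x ^ (β / 2))
        ((ContinuousLinearMap.adjoint (ContinuousLinearMap.adjoint T)).comp
          (ContinuousLinearMap.adjoint T)) :=
    fun β => CFC.rpow_eq_cfc_real hB
  have hn1 := fun f hf => gpd_norm_comp T f hf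
  have hn2 := fun f hf => gpd_norm_comp (ContinuousLinearMap.adjoint T) f hf
  have hle := fun f hf => gpd_norm_le T f hf
  have hTA : T.comp ((ContinuousLinearMap.adjoint T).comp T) =
      ((ContinuousLinearMap.adjoint (ContinuousLinearMap.adjoint T)).comp
          (ContinuousLinearMap.adjoint T)).comp T := by
    rw [ContinuousLinearMap.adjoint_adjoint]; rfl
  have hint := fun f hf => gpd_intertwine T _ _ hA hB hTA f hf
  set A := (ContinuousLinearMap.adjoint T).comp T with hAdef
  set B := (ContinuousLinearMap.adjoint (ContinuousLinearMap.adjoint T)).comp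
          (ContinuousLinearMap.adjoint T) with hBdef
  have hAs : IsSelfAdjoint A := .of_nonneg hA
  have hBs : IsSelfAdjoint B := .of_nonneg hB
  obtain ⟨p, hp⟩ : ∃ p, p = α / 2 := ⟨_, rfl⟩
  have hp0 : 0 ≤ p := by linarith
  have hp2 : 2 * p < 1 := by linarith
  let e : ℕ → ℝ := fun n => 1 / ((n : ℝ) + 1)
  have he : ∀ n, 0 < e n := fun n => by positivity
  have hlim : Tendsto e atTop (𝓝 0) := tendsto_one_div_add_atTop_nhds_zero_nat
  have hanti : ∀ N n, N ≤ n → e n ≤ e N := fun N n h => by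
    have : (N : ℝ) ≤ n := by exact_mod_cast h
    simp only [e]; gcongr
  let g : ℕ → ℝ → ℝ := fun n => gpdG p (e n)
  have hg : ∀ n, Continuous (g n) := fun n => gpdG_cont p _ (he n)
  let V : ℕ → H →L[ℂ] K := fun n => T.comp (cfc (g n) A)
  have hcau : CauchySeq V := by
    refine cauchySeq_of_le_tendsto_0 (fun N => √(2 ^ 0 * e N ^ (1 - 2 * p))) ?_ ?_
    · intro n m N hn hm
      rw [dist_eq_norm]
      have hgn := hg n
      have hgm := hg m
      have : V n - V m = T.comp (cfc (fun x => g n x - g m x) A) := by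
        rw [cfc_sub (g n) (g m) A, ContinuousLinearMap.comp_sub]
      rw [this, pow_zero, one_mul]
      exact hle _ (hgn.sub hgm) _ (Real.rpow_nonneg (he N).le _) fun x hx =>
        gpdG_est_cauchy p _ _ _ x hp0 hp2 (he n) (he m) (hanti N n hn) (hanti N m hm) hx
    · have := (hlim.rpow_const (p := 1 - 2 * p) (Or.inr (by linarith))).sqrt
      rw [Real.zero_rpow (by linarith), Real.sqrt_zero] at this
      simpa using this
  obtain ⟨U, hU⟩ := cauchySeq_tendsto_of_complete hcau
  have hUadj : Tendsto (fun n => ContinuousLinearMap.adjoint (V n)) atTop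
      (𝓝 (ContinuousLinearMap.adjoint U)) :=
    ((ContinuousLinearMap.adjoint (𝕜 := ℂ) (E := H) (F := K)).continuous.tendsto U).comp hU
  have h5 : ∀ β : ℝ, 0 < β →
        U.comp (absPow T β) = (absPow (ContinuousLinearMap.adjoint T) β).comp U := by
    intro β hβ
    rw [hpA, hpB]
    have hc : Continuous (fun x : ℝ => x ^ (β / 2)) := Real.continuous_rpow_const (by linarith)
    refine tendsto_nhds_unique (gpd_tendsto_comp hU tendsto_const_nhds) ?_
    refine (gpd_tendsto_comp tendsto_const_nhds hU).congr fun n => ?_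
    have hcomm : (cfc (fun x : ℝ => x ^ (β / 2)) A) * (cfc (g n) A) =
      (cfc (g n) A) * (cfc (fun x : ℝ => x ^ (β / 2)) A) := cfc_commute_cfc _ _ A
    change ((cfc (fun x : ℝ => x ^ (β / 2)) B).comp T).comp (cfc (g n) A) =
      T.comp ((cfc (g n) A) * (cfc (fun x : ℝ => x ^ (β / 2)) A))
    rw [← hint _ hc, ← hcomm]; rfl
  have h1 : T = U.comp (absPow T α) := by
    rw [hpA]
    refine tendsto_nhds_unique ?_ (gpd_tendsto_comp hU tendsto_const_nhds)
    rw [tendsto_iff_norm_sub_tendsto_zero]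
    have hl : Tendsto (fun n => √(e n)) atTop (𝓝 0) := by simpa using hlim.sqrt
    refine squeeze_zero (fun _ => norm_nonneg _) (fun n => ?_) hl
    rw [← hp]
    have hc : Continuous (fun x : ℝ => x ^ p) := Real.continuous_rpow_const hp0
    have hgn := hg n
    have : (V n).comp (cfc (fun x : ℝ => x ^ p) A) - T =
        T.comp (cfc (fun x => g n x * x ^ p - 1) A) := by
      rw [cfc_sub (fun x => g n x * x ^ p) (fun _ => 1) A (hgn.mul hc).continuousOn
          continuousOn_const,
        cfc_mul (g n) (fun x => x ^ p) A hgn.continuousOn hc.continuousOn, cfc_const_one ℝ A, ContinuousLinearMap.comp_sub]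
      rfl
    rw [this]
    exact hle _ ((hgn.mul hc).sub continuous_const) _ (he n).le fun x hx =>
      gpdG_est_one p _ x hp0 (he n) hx
  have hexp : 2 * (1 - α) / 2 = 1 - 2 * p := by rw [hp]; ring
  refine ⟨U, h1, ?_, ?_, ?_, h5⟩
  · have h2 := h1
    rw [h5 α hα0] at h2
    have h3 : ContinuousLinearMap.adjoint (absPow (ContinuousLinearMap.adjoint T) α) =
        absPow (ContinuousLinearMap.adjoint T) α := by
      rw [hpB]
      exact (cfc_predicate (fun x : ℝ => x ^ (α / 2)) B : IsSelfAdjoint _)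
    have h4 := congrArg ContinuousLinearMap.adjoint h2
    rwa [ContinuousLinearMap.adjoint_comp, h3] at h4
  · rw [hpA, hexp]
    refine tendsto_nhds_unique (gpd_tendsto_comp hUadj hU) ?_
    refine (gpd_sq_tendsto A hA p hp0 hp2 e he hlim).congr fun n => ?_
    exact (hn1 _ (hg n)).symm
  · rw [hpB, hexp]
    refine tendsto_nhds_unique (gpd_tendsto_comp hU hUadj) ?_
    refine (gpd_sq_tendsto B hB p hp0 hp2 e he hlim).congr fun n => ?_
    refine (hn2 _ (hg n)).symm.trans ?_
    have hs : ContinuousLinearMap.adjoint (cfc (g n) B) = cfc (g n) B :=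
      (cfc_predicate (g n) B : IsSelfAdjoint _)
    have hV : V n = (cfc (g n) B).comp T := hint _ (hg n)
    rw [hV]
    simp only [ContinuousLinearMap.adjoint_comp, ContinuousLinearMap.adjoint_adjoint]
    change (ContinuousLinearMap.adjoint (cfc (g n) B)).comp T ∘L
      (ContinuousLinearMap.adjoint T).comp (cfc (g n) B) = _
    rw [hs]
end

section
/- Let H, K, G, G' be complex Hilbert spaces, let A ∈ B(H,K), and let V_A ∈ B(H,K) be the unique operator with |A*|^{1/2} V_A = A and range V_A ⊆ closure(range A). Suppose T₂₁ ∈ B(G,K) satisfies range T₂₁ ⊆ range(|A*|^{1/2}) and T₁₂* ∈ B(G',H) satisfies range T₁₂* ⊆ range(|A|^{1/2}). Then all four reduced solutions exist: E of V_A Y = T₂₁, F of |A|^{1/2}Y = T₁₂*, Ẽ of |A*|^{1/2}Z = T₂₁, and F̃ of V_A* Z = T₁₂*; and moreover F*∘E = F̃*∘Ẽ in B(G,G'). -/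
/-- `D` is the reduced solution of the system `A X = C`. -/
def IsReducedSolution {E H K : Type*}
    [NormedAddCommGroup E] [InnerProductSpace ℂ E] [CompleteSpace E]
    [NormedAddCommGroup H] [InnerProductSpace ℂ H] [CompleteSpace H]
    [NormedAddCommGroup K] [InnerProductSpace ℂ K] [CompleteSpace K]
    (A : H →L[ℂ] K) (C : E →L[ℂ] K) (D : E →L[ℂ] H) : Prop :=
  A.comp D = C ∧ Set.range D ⊆ closure (Set.range (ContinuousLinearMap.adjoint A))


open ContinuousLinearMap in
/-- A range inclusion yields a reduced solution (Douglas). -/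
theorem exists_reduced {E H K : Type*}
    [NormedAddCommGroup E] [InnerProductSpace ℂ E] [CompleteSpace E]
    [NormedAddCommGroup H] [InnerProductSpace ℂ H] [CompleteSpace H]
    [NormedAddCommGroup K] [InnerProductSpace ℂ K] [CompleteSpace K]
    (A : H →L[ℂ] K) (C : E →L[ℂ] K) (h : Set.range C ⊆ Set.range A) :
    ∃ D : E →L[ℂ] H, IsReducedSolution A C D := by
  classical
  let M : Submodule ℂ H := (A.ker)ᗮ
  have hex : ∀ x : E, ∃ y : H, y ∈ M ∧ A y = C x := by
    intro x
    obtain ⟨y, hy⟩ := h ⟨x, rfl⟩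
    have : CompleteSpace A.ker := (ContinuousLinearMap.isClosed_ker A).completeSpace_coe
    refine ⟨y - A.ker.starProjection y, Submodule.sub_starProjection_mem_orthogonal y, ?_⟩
    have h0 : A (A.ker.starProjection y) = 0 := by
      have : A.ker.starProjection y ∈ A.ker := Submodule.starProjection_apply_mem _ y
      exact LinearMap.mem_ker.1 this
    rw [map_sub, h0, sub_zero, hy]
  have hinj : ∀ y z : H, y ∈ M → z ∈ M → A y = A z → y = z := by
    intro y z hy hz hyz
    have h1 : y - z ∈ M := M.sub_mem hy hz
    have h2 : y - z ∈ A.ker := by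
      simp [hyz, sub_eq_zero]
    have h3 : inner ℂ (y - z) (y - z) = 0 := (Submodule.mem_orthogonal _ _).1 h1 _ h2
    exact sub_eq_zero.1 (inner_self_eq_zero.1 h3)
  choose f hfM hfA using hex
  let g : E →ₗ[ℂ] H :=
    { toFun := f
      map_add' := fun x y => hinj _ _ (hfM _) (M.add_mem (hfM _) (hfM _)) (by simp [hfA])
      map_smul' := fun c x => hinj _ _ (hfM _) (M.smul_mem _ (hfM _)) (by simp [hfA]) }
  have hMc : IsClosed (M : Set H) := Submodule.isClosed_orthogonal _
  let D : E →L[ℂ] H := ContinuousLinearMap.ofSeqClosedGraph (g := g) (by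
    intro u x y hu hy
    have hyM : y ∈ M := hMc.mem_of_tendsto hy (Filter.Eventually.of_forall fun n => hfM _)
    refine hinj _ _ hyM (hfM _) ?_
    have h1 : Filter.Tendsto (fun n => A (g (u n))) Filter.atTop (nhds (A y)) :=
      (A.continuous.tendsto _).comp hy
    have h2 : Filter.Tendsto (fun n => A (g (u n))) Filter.atTop (nhds (C x)) := by
      have : (fun n => A (g (u n))) = fun n => C (u n) := funext fun n => hfA _
      rw [this]
      exact (C.continuous.tendsto _).comp hu
    refine Eq.trans ?_ (hfA x).symm
    exact tendsto_nhds_unique h1 h2)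
  refine ⟨D, ?_, ?_⟩
  · ext x
    exact hfA x
  · rintro _ ⟨x, rfl⟩
    have h1 : f x ∈ M := hfM x
    have h2 : f x ∈ (adjoint A).range.topologicalClosure := by
      rw [← ContinuousLinearMap.orthogonal_ker]; exact h1
    simpa [← SetLike.mem_coe, Submodule.topologicalClosure_coe] using! h2

/-- Partial isometry factorization. -/
theorem exists_polar {H K : Type*}
    [NormedAddCommGroup H] [InnerProductSpace ℂ H] [CompleteSpace H]
    [NormedAddCommGroup K] [InnerProductSpace ℂ K] [CompleteSpace K]
    (V : H →L[ℂ] K) (P : H →L[ℂ] H) (hP : ContinuousLinearMap.adjoint P = P)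
    (h : (ContinuousLinearMap.adjoint V).comp V = P.comp P) :
    ∃ W : H →L[ℂ] K, W.comp P = V ∧ (ContinuousLinearMap.adjoint V).comp W = P := by
  have hn : ∀ x, ‖V x‖ = ‖P x‖ := by
    intro x
    have h1 : inner ℂ (V x) (V x) = inner ℂ (P x) (P x) := by
      rw [← ContinuousLinearMap.adjoint_inner_left, ← ContinuousLinearMap.adjoint_inner_left, hP]
      have := congrArg (fun T => T x) h
      simp only [ContinuousLinearMap.comp_apply] at this
      rw [this]
    rw [inner_self_eq_norm_sq_to_K, inner_self_eq_norm_sq_to_K] at h1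
    have h2 : ‖V x‖ ^ 2 = ‖P x‖ ^ 2 := by exact_mod_cast h1
    exact (sq_eq_sq₀ (norm_nonneg _) (norm_nonneg _)).1 h2
  let M : Submodule ℂ H := P.range.topologicalClosure
  have hPM : ∀ x, P x ∈ M := fun x => Submodule.le_topologicalClosure _ ⟨x, rfl⟩
  have : CompleteSpace M := (Submodule.isClosed_topologicalClosure _).completeSpace_coe
  let e : H →ₗ[ℂ] M := (P : H →ₗ[ℂ] H).codRestrict M hPM
  have hd : DenseRange e := by
    intro y
    rw [closure_subtype]
    have hy : (y : H) ∈ closure (Set.range P) := by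
      have := y.2
      simpa [M, ← SetLike.mem_coe, Submodule.topologicalClosure_coe] using! this
    convert hy using 2
    ext z
    constructor
    · rintro ⟨_, ⟨x, rfl⟩, rfl⟩; exact ⟨x, rfl⟩
    · rintro ⟨x, rfl⟩; exact ⟨e x, ⟨x, rfl⟩, rfl⟩
  let W0 : M →L[ℂ] K := (V : H →ₗ[ℂ] K).extendOfNorm e
  have hW0 : ∀ x, W0 (e x) = V x := fun x =>
    LinearMap.extendOfNorm_eq (f := (V : H →ₗ[ℂ] K)) hd ⟨1, fun x => by
      rw [one_mul]; exact (hn x).le⟩ x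
  have hWV : ∀ m : M, ContinuousLinearMap.adjoint V (W0 m) = P m := by
    intro m
    refine hd.induction_on (p := fun m : M => ContinuousLinearMap.adjoint V (W0 m) = P m) m
      (isClosed_eq (by fun_prop) (by fun_prop)) ?_
    intro x
    rw [hW0]
    exact congrArg (fun T => T x) h
  refine ⟨W0.comp M.orthogonalProjectionOnto, ?_, ?_⟩
  · ext x
    have : M.orthogonalProjectionOnto (P x) = e x :=
      Submodule.orthogonalProjectionOnto_mem_subspace_eq_self (K := M) (e x)
    simp only [ContinuousLinearMap.comp_apply]
    rw [this, hW0]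
  · ext y
    simp only [ContinuousLinearMap.comp_apply]
    rw [hWV]
    have h1 : y - M.orthogonalProjectionOnto y ∈ Mᗮ := Submodule.sub_starProjection_mem_orthogonal y
    have h2 : P (y - M.orthogonalProjectionOnto y) = 0 := by
      refine ext_inner_left ℂ fun v => ?_
      rw [inner_zero_right, ← ContinuousLinearMap.adjoint_inner_left, hP]
      exact (Submodule.mem_orthogonal _ _).1 h1 _ (hPM v)
    rw [map_sub, sub_eq_zero] at h2
    exact h2.symm

theorem absPow_half {H K : Type*} [NormedAddCommGroup H] [InnerProductSpace ℂ H]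
    [NormedAddCommGroup K] [InnerProductSpace ℂ K] [CompleteSpace H] [CompleteSpace K]
    (T : H →L[ℂ] K) : 0 ≤ absPow T (1/2) ∧
      absPow T (1/2) * absPow T (1/2) =
        CFC.sqrt ((ContinuousLinearMap.adjoint T).comp T) ∧
      0 ≤ (ContinuousLinearMap.adjoint T).comp T := by
  have h0 : 0 ≤ (ContinuousLinearMap.adjoint T).comp T := by
    rw [ContinuousLinearMap.nonneg_iff_isPositive]
    exact ContinuousLinearMap.isPositive_adjoint_comp_self T
  have h : absPow T (1/2) = CFC.sqrt (CFC.sqrt ((ContinuousLinearMap.adjoint T).comp T)) := by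
    rw [CFC.sqrt_eq_rpow, CFC.sqrt_eq_rpow,
      CFC.rpow_rpow_of_exponent_nonneg _ _ _ (by norm_num) (by norm_num) h0]
    unfold absPow
    rw [show ((1:ℝ)/2/2) = 1/2*(1/2) by norm_num]
    rfl
  refine ⟨?_, ?_, h0⟩
  · rw [h]; exact CFC.sqrt_nonneg _
  · rw [h]; exact CFC.sqrt_mul_sqrt_self _ (CFC.sqrt_nonneg _)

theorem mem_closure_inj {H : Type*} [NormedAddCommGroup H] [InnerProductSpace ℂ H]
    [CompleteSpace H] (S : H →L[ℂ] H) (hS : ContinuousLinearMap.adjoint S = S) (z : H)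
    (hz : z ∈ closure (Set.range S)) (h0 : S z = 0) : z = 0 := by
  have h1 : ∀ w ∈ closure (Set.range S), inner ℂ w z = 0 := by
    intro w hw
    refine closure_minimal (s := Set.range S) (t := {w | inner ℂ w z = 0}) ?_
      (isClosed_eq (by fun_prop) (by fun_prop)) hw
    rintro _ ⟨x, rfl⟩
    show inner ℂ (S x) z = 0
    rw [← ContinuousLinearMap.adjoint_inner_right, hS, h0, inner_zero_right]
  exact inner_self_eq_zero.1 (h1 z hz)


/-- Proposition 5.4 (Hilbert-space case): the range inclusions guarantee that the four
reduced solutions exist, and `F*E = F̃*Ẽ`. -/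
theorem weakly_complementable_of_range_inclusions
    {H K G G' : Type*}
    [NormedAddCommGroup H] [InnerProductSpace ℂ H] [CompleteSpace H]
    [NormedAddCommGroup K] [InnerProductSpace ℂ K] [CompleteSpace K]
    [NormedAddCommGroup G] [InnerProductSpace ℂ G] [CompleteSpace G]
    [NormedAddCommGroup G'] [InnerProductSpace ℂ G'] [CompleteSpace G']
    (A : H →L[ℂ] K)
    -- `V_A` is the (unique) operator with `|A*|^{1/2} V_A = A` and `R(V_A) ⊆ closure R(A)`
    (V_A : H →L[ℂ] K)
    (hV₁ : (absPow (ContinuousLinearMap.adjoint A) (1/2)).comp V_A = A)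
    (hV₂ : Set.range V_A ⊆ closure (Set.range A))
    (hVuniq : ∀ W : H →L[ℂ] K,
      (absPow (ContinuousLinearMap.adjoint A) (1/2)).comp W = A →
      Set.range W ⊆ closure (Set.range A) → W = V_A)
    (T₂₁ : G →L[ℂ] K) (T₁₂s : G' →L[ℂ] H)
    (h₂₁ : Set.range T₂₁ ⊆ Set.range (absPow (ContinuousLinearMap.adjoint A) (1/2)))
    (h₁₂ : Set.range T₁₂s ⊆ Set.range (absPow A (1/2))) :
    ∃ (E : G →L[ℂ] H) (F : G' →L[ℂ] H) (Et : G →L[ℂ] K) (Ft : G' →L[ℂ] K),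
      IsReducedSolution V_A T₂₁ E ∧
      IsReducedSolution (absPow A (1/2)) T₁₂s F ∧
      IsReducedSolution (absPow (ContinuousLinearMap.adjoint A) (1/2)) T₂₁ Et ∧
      IsReducedSolution (ContinuousLinearMap.adjoint V_A) T₁₂s Ft ∧
      (ContinuousLinearMap.adjoint F).comp E = (ContinuousLinearMap.adjoint Ft).comp Et := by


  classical
  obtain ⟨hS0, hSS, hAA⟩ := absPow_half (ContinuousLinearMap.adjoint A)
  obtain ⟨hP0, hPP, hAA'⟩ := absPow_half A
  rw [ContinuousLinearMap.adjoint_adjoint] at hSS hAA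
  set S := absPow (ContinuousLinearMap.adjoint A) (1/2) with hSdef
  set P := absPow A (1/2) with hPdef
  have hSa : ContinuousLinearMap.adjoint S = S := hS0.isSelfAdjoint
  have hPa : ContinuousLinearMap.adjoint P = P := hP0.isSelfAdjoint
  have hS4 : (S * S) * (S * S) = A.comp (ContinuousLinearMap.adjoint A) := by
    rw [hSS]; exact CFC.sqrt_mul_sqrt_self _ hAA
  have hAst : ContinuousLinearMap.adjoint A = (ContinuousLinearMap.adjoint V_A).comp S := by
    rw [← hV₁, ContinuousLinearMap.adjoint_comp, hSa]
  -- pointwise versions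
  have hA : ∀ x, S (V_A x) = A x := fun x => congrArg (fun T => T x) hV₁
  have hAs : ∀ x, ContinuousLinearMap.adjoint A x = ContinuousLinearMap.adjoint V_A (S x) :=
    fun x => congrArg (fun T => T x) hAst
  let N : K →L[ℂ] K := V_A.comp (ContinuousLinearMap.adjoint V_A) - S * S
  have hNa : ContinuousLinearMap.adjoint N = N := by
    simp only [N, map_sub, ContinuousLinearMap.mul_def, ContinuousLinearMap.adjoint_comp,
      ContinuousLinearMap.adjoint_adjoint, hSa]
  have hSNS : ∀ x, S (N (S x)) = 0 := by
    intro x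
    have h4 : S (S (S (S x))) = A (ContinuousLinearMap.adjoint A x) :=
      congrArg (fun T => T x) hS4
    have : N (S x) = V_A (ContinuousLinearMap.adjoint V_A (S x)) - S (S (S x)) := rfl
    rw [this, map_sub, hA, h4, hAs, sub_self]
  have hcl : closure (Set.range A) ⊆ closure (Set.range S) := by
    apply closure_mono
    rintro _ ⟨x, rfl⟩
    exact ⟨V_A x, hA x⟩
  have hNM : ∀ x, N x ∈ closure (Set.range S) := by
    intro x
    have e1 : closure (Set.range S) = (S.range.topologicalClosure : Set K) := by
      rw [Submodule.topologicalClosure_coe]; rfl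
    rw [e1]
    refine Submodule.sub_mem _ ?_ ?_
    · rw [← SetLike.mem_coe, ← e1]
      exact hcl (hV₂ ⟨_, rfl⟩)
    · exact Submodule.le_topologicalClosure _ ⟨S x, rfl⟩
  have hNS : N.comp S = 0 := by
    ext x
    exact mem_closure_inj S hSa _ (hNM _) (hSNS x)
  have hSN : S.comp N = 0 := by
    have := congrArg ContinuousLinearMap.adjoint hNS
    rwa [ContinuousLinearMap.adjoint_comp, hNa, hSa, map_zero] at this
  have hN : N = 0 := by
    ext x
    exact mem_closure_inj S hSa _ (hNM _) (congrArg (fun T => T x) hSN)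
  have hVV : V_A.comp (ContinuousLinearMap.adjoint V_A) = S * S := sub_eq_zero.1 hN
  have hVVp : ∀ x, V_A (ContinuousLinearMap.adjoint V_A x) = S (S x) :=
    fun x => congrArg (fun T => T x) hVV
  have hVsV : (ContinuousLinearMap.adjoint V_A).comp V_A = P.comp P := by
    have h1 : CFC.sqrt ((ContinuousLinearMap.adjoint A).comp A) =
        (ContinuousLinearMap.adjoint V_A).comp V_A := by
      apply CFC.sqrt_unique
      · ext x
        show ContinuousLinearMap.adjoint V_A (V_A (ContinuousLinearMap.adjoint V_A (V_A x))) =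
          ContinuousLinearMap.adjoint A (A x)
        rw [hVVp, hAs, hA]
      · rw [ContinuousLinearMap.nonneg_iff_isPositive]
        exact ContinuousLinearMap.isPositive_adjoint_comp_self V_A
    rw [← h1, ← hPP]; rfl
  obtain ⟨W, hWP, hVW⟩ := exists_polar V_A P hPa hVsV
  have hWV : (ContinuousLinearMap.adjoint W).comp V_A = P := by
    have := congrArg ContinuousLinearMap.adjoint hVW
    rwa [ContinuousLinearMap.adjoint_comp, ContinuousLinearMap.adjoint_adjoint, hPa] at this
  have hPW : P.comp (ContinuousLinearMap.adjoint W) = ContinuousLinearMap.adjoint V_A := by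
    rw [← hWP, ContinuousLinearMap.adjoint_comp, hPa]
  have hWPp : ∀ x, W (P x) = V_A x := fun x => congrArg (fun T => T x) hWP
  have hVWp : ∀ x, ContinuousLinearMap.adjoint V_A (W x) = P x :=
    fun x => congrArg (fun T => T x) hVW
  have hWVp : ∀ x, ContinuousLinearMap.adjoint W (V_A x) = P x :=
    fun x => congrArg (fun T => T x) hWV
  have hPWp : ∀ x, P (ContinuousLinearMap.adjoint W x) = ContinuousLinearMap.adjoint V_A x :=
    fun x => congrArg (fun T => T x) hPW
  -- `S = W P W* = V W*`
  have hS : V_A.comp (ContinuousLinearMap.adjoint W) = S := by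
    have hpos : 0 ≤ V_A.comp (ContinuousLinearMap.adjoint W) := by
      rw [← hWP, ContinuousLinearMap.nonneg_iff_isPositive]
      exact ((ContinuousLinearMap.nonneg_iff_isPositive P).1 hP0).conj_adjoint W
    have h1 : CFC.sqrt (S * S) = V_A.comp (ContinuousLinearMap.adjoint W) := by
      apply CFC.sqrt_unique _ hpos
      ext x
      show V_A (ContinuousLinearMap.adjoint W (V_A (ContinuousLinearMap.adjoint W x))) = S (S x)
      rw [hWVp, hPWp, hVVp]
    rw [← h1]
    exact CFC.sqrt_mul_self S hS0
  have hSp : ∀ x, V_A (ContinuousLinearMap.adjoint W x) = S x :=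
    fun x => congrArg (fun T => T x) hS
  have hWS : (ContinuousLinearMap.adjoint W).comp S = ContinuousLinearMap.adjoint V_A := by
    ext x
    show ContinuousLinearMap.adjoint W (S x) = _
    rw [← hSp, hWVp, hPWp]
  obtain ⟨F, hF1, hF2⟩ := exists_reduced P T₁₂s h₁₂
  obtain ⟨Et, hE1, hE2⟩ := exists_reduced S T₂₁ h₂₁
  rw [hPa] at hF2
  rw [hSa] at hE2
  refine ⟨(ContinuousLinearMap.adjoint W).comp Et, F, Et, W.comp F, ⟨?_, ?_⟩, ⟨hF1, ?_⟩,
    ⟨hE1, ?_⟩, ⟨?_, ?_⟩, ?_⟩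
  · rw [← hE1, ← ContinuousLinearMap.comp_assoc, hS]
  · rintro _ ⟨x, rfl⟩
    have h1 := image_closure_subset_closure_image (ContinuousLinearMap.adjoint W).continuous
      ⟨Et x, hE2 ⟨x, rfl⟩, rfl⟩
    refine closure_mono ?_ h1
    rintro _ ⟨_, ⟨y, rfl⟩, rfl⟩
    exact ⟨y, (congrArg (fun T => T y) hWS).symm⟩
  · rw [hPa]; exact hF2
  · rw [hSa]; exact hE2
  · rw [← hF1, ← ContinuousLinearMap.comp_assoc, hVW]
  · rw [ContinuousLinearMap.adjoint_adjoint]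
    rintro _ ⟨x, rfl⟩
    have h1 := image_closure_subset_closure_image W.continuous ⟨F x, hF2 ⟨x, rfl⟩, rfl⟩
    refine closure_mono ?_ h1
    rintro _ ⟨_, ⟨y, rfl⟩, rfl⟩
    exact ⟨y, (hWPp y).symm⟩
  · rw [ContinuousLinearMap.adjoint_comp, ContinuousLinearMap.comp_assoc]
end

section
/- Let H₁, H₂, K₁, K₂ be complex Hilbert spaces and let T₁₁ ∈ B(H₁,K₁), T₁₂ ∈ B(H₂,K₁), T₂₁ ∈ B(H₁,K₂), T₂₂ ∈ B(H₂,K₂). Let T ∈ B(H₁ ⊕ H₂, K₁ ⊕ K₂) be the block operator T(x,y) = (T₁₁x + T₁₂y, T₂₁x + T₂₂y). Assume range T₂₁ ⊆ range(|T₂₂*|^{1/2}) and range T₁₂* ⊆ range(|T₂₂|^{1/2}), let E be the reduced solution of V_{T₂₂} Y = T₂₁ and F the reduced solution of |T₂₂|^{1/2}Y = T₁₂*, and set Σ = T₁₁ − F*∘E ∈ B(H₁,K₁). Then: (1) for every u ∈ K₁, if (u,0) ∈ range T then u ∈ range Σ; and (2) for every x ∈ H₁, the vector (Σx, 0) lies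 in the norm-closure of range T. -/
/-- The block operator `[[T₁₁, T₁₂],[T₂₁, T₂₂]]` on Hilbert space direct sums. -/
noncomputable def blockCLM {H₁ H₂ K₁ K₂ : Type*}
    [NormedAddCommGroup H₁] [InnerProductSpace ℂ H₁]
    [NormedAddCommGroup H₂] [InnerProductSpace ℂ H₂]
    [NormedAddCommGroup K₁] [InnerProductSpace ℂ K₁]
    [NormedAddCommGroup K₂] [InnerProductSpace ℂ K₂]
    (T₁₁ : H₁ →L[ℂ] K₁) (T₁₂ : H₂ →L[ℂ] K₁)
    (T₂₁ : H₁ →L[ℂ] K₂) (T₂₂ : H₂ →L[ℂ] K₂) :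
    WithLp 2 (H₁ × H₂) →L[ℂ] WithLp 2 (K₁ × K₂) :=
  ((WithLp.prodContinuousLinearEquiv 2 ℂ K₁ K₂).symm.toContinuousLinearMap.comp
    ((T₁₁.comp (ContinuousLinearMap.fst ℂ H₁ H₂) +
        T₁₂.comp (ContinuousLinearMap.snd ℂ H₁ H₂)).prod
      (T₂₁.comp (ContinuousLinearMap.fst ℂ H₁ H₂) +
        T₂₂.comp (ContinuousLinearMap.snd ℂ H₁ H₂)))).comp
    (WithLp.prodContinuousLinearEquiv 2 ℂ H₁ H₂).toContinuousLinearMap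

open ContinuousLinearMap in
lemma aux_aeval {H K : Type*} [NormedAddCommGroup H] [InnerProductSpace ℂ H]
    [NormedAddCommGroup K] [InnerProductSpace ℂ K]
    (B : H →L[ℂ] H) (C : K →L[ℂ] K) (T : H →L[ℂ] K) (h : C.comp T = T.comp B)
    (p : Polynomial ℝ) :
    (Polynomial.aeval C p).comp T = T.comp (Polynomial.aeval B p) := by
  induction p using Polynomial.induction_on' with
  | add p q hp hq => simp [add_comp, comp_add, hp, hq]
  | monomial n a =>
    have hn : ∀ n : ℕ, (C ^ n).comp T = T.comp (B ^ n) := by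
      intro n
      induction n with
      | zero => ext x; simp
      | succ n ih =>
        rw [pow_succ, pow_succ, mul_def, mul_def, comp_assoc, h, ← comp_assoc, ih, comp_assoc]
    rw [Polynomial.aeval_monomial, Polynomial.aeval_monomial, Algebra.algebraMap_eq_smul_one,
      Algebra.algebraMap_eq_smul_one, smul_mul_assoc, smul_mul_assoc, one_mul, one_mul]
    ext x
    have := congrArg (fun S : H →L[ℂ] K => a • S x) (hn n)
    simpa using this

open ContinuousLinearMap in
lemma aux_cfc {H K : Type*} [NormedAddCommGroup H] [InnerProductSpace ℂ H] [CompleteSpace H]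
    [NormedAddCommGroup K] [InnerProductSpace ℂ K] [CompleteSpace K]
    (B : H →L[ℂ] H) (C : K →L[ℂ] K) (hB : IsSelfAdjoint B) (hC : IsSelfAdjoint C)
    (T : H →L[ℂ] K) (h : C.comp T = T.comp B) (f : ℝ → ℝ) (hf : Continuous f) :
    (cfc f C).comp T = T.comp (cfc f B) := by
  obtain ⟨R, hR⟩ : ∃ R : ℝ, spectrum ℝ B ∪ spectrum ℝ C ⊆ Set.Icc (-R) R := by
    have hb := ((spectrum.isBounded B (𝕜 := ℝ)).union (spectrum.isBounded C (𝕜 := ℝ)))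
    obtain ⟨R, hR⟩ := hb.subset_closedBall 0
    exact ⟨R, by simpa [Real.closedBall_eq_Icc] using hR⟩
  rw [← sub_eq_zero, ← norm_le_zero_iff]
  refine le_of_forall_pos_le_add fun ε hε => ?_
  set δ := ε / (2 * (‖T‖ + 1)) with hδ
  have hδ0 : 0 < δ := by positivity
  obtain ⟨p, hp⟩ := exists_polynomial_near_of_continuousOn (-R) R f hf.continuousOn δ hδ0
  have key : ∀ {L : Type _} [NormedAddCommGroup L] [InnerProductSpace ℂ L] [CompleteSpace L]
      (D : L →L[ℂ] L) (_ : IsSelfAdjoint D) (_ : spectrum ℝ D ⊆ Set.Icc (-R) R),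
      ‖cfc f D - Polynomial.aeval D p‖ ≤ δ := by
    intro L _ _ _ D hD hs
    rw [← cfc_polynomial p D hD, ← cfc_sub f p.eval D]
    refine norm_cfc_le hδ0.le fun x hx => ?_
    rw [norm_sub_rev]
    exact (hp x (hs hx)).le
  have key2 : ‖cfc f C - Polynomial.aeval C p‖ ≤ δ := by
    rw [← cfc_polynomial p C hC, ← cfc_sub f p.eval C]
    refine norm_cfc_le hδ0.le fun x hx => ?_
    rw [norm_sub_rev]
    exact (hp x (hR (Or.inr hx))).le
  have e : (cfc f C).comp T - T.comp (cfc f B) =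
      (cfc f C - Polynomial.aeval C p).comp T - T.comp (cfc f B - Polynomial.aeval B p) := by
    rw [sub_comp, comp_sub, aux_aeval B C T h p]; abel
  rw [e, zero_add]
  have h1 := opNorm_comp_le (cfc f C - Polynomial.aeval C p) T
  have h2 := opNorm_comp_le T (cfc f B - Polynomial.aeval B p)
  have h3 := key B hB (Set.subset_union_left.trans hR)
  have h4 := norm_sub_le ((cfc f C - Polynomial.aeval C p).comp T)
    (T.comp (cfc f B - Polynomial.aeval B p))
  have h5 : δ * (2 * (‖T‖ + 1)) = ε := by rw [hδ]; field_simp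
  have hT := norm_nonneg T
  nlinarith [mul_le_mul_of_nonneg_right key2 hT, mul_le_mul_of_nonneg_left h3 hT]

section
open ContinuousLinearMap
variable {H K : Type*} [NormedAddCommGroup H] [InnerProductSpace ℂ H] [CompleteSpace H]
    [NormedAddCommGroup K] [InnerProductSpace ℂ K] [CompleteSpace K]

lemma aux_nonneg (T : H →L[ℂ] K) : 0 ≤ (adjoint T).comp T :=
  (nonneg_iff_isPositive _).2 (isPositive_adjoint_comp_self T)

lemma aux_absPow_sa (T : H →L[ℂ] K) (a : ℝ) : adjoint (absPow T a) = absPow T a := by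
  have : IsSelfAdjoint (absPow T a) :=
    IsSelfAdjoint.of_nonneg (CFC.rpow_nonneg (a := (adjoint T).comp T) (y := a / 2))
  exact this

lemma aux_absPow_four (T : H →L[ℂ] K) : (absPow T (1/2)) ^ 4 = (adjoint T).comp T := by
  have h0 := aux_nonneg T
  have h1 : 0 ≤ absPow T (1/2) := CFC.rpow_nonneg (a := (adjoint T).comp T) (y := (1/2) / 2)
  rw [← CFC.rpow_natCast _ 4 h1]
  change (((adjoint T).comp T) ^ ((1/2:ℝ) / 2)) ^ ((4:ℕ):ℝ) = _
  rw [CFC.rpow_rpow_of_exponent_nonneg _ _ _ (by norm_num) (by norm_num) h0]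
  norm_num
  exact CFC.rpow_one _ h0

lemma aux_ker (T : H →L[ℂ] K) (z : H) : absPow T (1/2) z = 0 ↔ T z = 0 := by
  set P := absPow T (1/2) with hP
  have hsa : adjoint P = P := aux_absPow_sa T _
  have h4 : ∀ z, P (P (P (P z))) = adjoint T (T z) := by
    intro z
    have := congrArg (fun S : H →L[ℂ] H => S z) (aux_absPow_four T)
    rw [← hP] at this
    simpa [pow_succ] using this
  have hin : ∀ x y, inner ℂ (P x) y = inner ℂ x (P y) := by
    intro x y
    rw [← adjoint_inner_right, hsa]
  have hsq : ∀ z, P (P z) = 0 → P z = 0 := by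
    intro z hz
    rw [← inner_self_eq_zero (𝕜 := ℂ), hin, hz, inner_zero_right]
  constructor
  · intro hz
    rw [← inner_self_eq_zero (𝕜 := ℂ), ← adjoint_inner_right, ← h4, hz]
    simp
  · intro hz
    apply hsq
    apply hsq
    apply hsq
    rw [h4, hz, map_zero]

lemma aux_inter (T : H →L[ℂ] K) :
    (absPow (adjoint T) (1/2)).comp T = T.comp (absPow T (1/2)) := by
  have h1 : absPow T (1/2) = cfc (fun x : ℝ => x ^ ((1/2:ℝ)/2)) ((adjoint T).comp T) :=
    CFC.rpow_eq_cfc_real (aux_nonneg T)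
  have h2 : absPow (adjoint T) (1/2) =
      cfc (fun x : ℝ => x ^ ((1/2:ℝ)/2)) ((adjoint (adjoint T)).comp (adjoint T)) :=
    CFC.rpow_eq_cfc_real (aux_nonneg (adjoint T))
  rw [h1, h2]
  have s1 : IsSelfAdjoint ((adjoint T).comp T) := IsSelfAdjoint.of_nonneg (aux_nonneg T)
  have s2 : IsSelfAdjoint ((adjoint (adjoint T)).comp (adjoint T)) :=
    IsSelfAdjoint.of_nonneg (aux_nonneg (adjoint T))
  refine aux_cfc _ _ s1 s2 T ?_ _ ?_
  · rw [adjoint_adjoint, comp_assoc]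
  · exact Real.continuous_rpow_const (by norm_num)

lemma aux_closure (A : H →L[ℂ] K) (w : H) :
    w ∈ closure (Set.range (adjoint A)) ↔ ∀ z, A z = 0 → inner ℂ z w = 0 := by
  have h := congrArg (fun S : Submodule ℂ H => w ∈ S) A.orthogonal_ker
  have h' : w ∈ closure (Set.range (adjoint A)) ↔ w ∈ A.kerᗮ := by
    rw [A.orthogonal_ker]; rfl
  rw [h', Submodule.mem_orthogonal]
  rfl
end

/-- Hilbert-space case of Proposition 5.6:
`R(T) ∩ N ⊆ R(T_{/(M,N)}) ⊆ closure (R(T)) ∩ N`, stated for the nonzero block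
`Σ = T₁₁ - F*E` of the bilateral shorted operator. -/
theorem range_shorted_operator_of_weakly_complementable
    {H₁ H₂ K₁ K₂ : Type*}
    [NormedAddCommGroup H₁] [InnerProductSpace ℂ H₁] [CompleteSpace H₁]
    [NormedAddCommGroup H₂] [InnerProductSpace ℂ H₂] [CompleteSpace H₂]
    [NormedAddCommGroup K₁] [InnerProductSpace ℂ K₁] [CompleteSpace K₁]
    [NormedAddCommGroup K₂] [InnerProductSpace ℂ K₂] [CompleteSpace K₂]
    (T₁₁ : H₁ →L[ℂ] K₁) (T₁₂ : H₂ →L[ℂ] K₁)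
    (T₂₁ : H₁ →L[ℂ] K₂) (T₂₂ : H₂ →L[ℂ] K₂)
    -- the range inclusions (weak complementability)
    (h₂₁ : Set.range T₂₁ ⊆ Set.range (absPow (ContinuousLinearMap.adjoint T₂₂) (1/2)))
    (h₁₂ : Set.range (ContinuousLinearMap.adjoint T₁₂) ⊆ Set.range (absPow T₂₂ (1/2)))
    -- `V` is the (unique) operator with `|T₂₂*|^{1/2} V = T₂₂` and `R(V) ⊆ closure R(T₂₂)`
    (V : H₂ →L[ℂ] K₂)
    (hV₁ : (absPow (ContinuousLinearMap.adjoint T₂₂) (1/2)).comp V = T₂₂)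
    (hV₂ : Set.range V ⊆ closure (Set.range T₂₂))
    (hVuniq : ∀ W : H₂ →L[ℂ] K₂,
      (absPow (ContinuousLinearMap.adjoint T₂₂) (1/2)).comp W = T₂₂ →
      Set.range W ⊆ closure (Set.range T₂₂) → W = V)
    -- the reduced solutions `E` and `F`
    (E : H₁ →L[ℂ] H₂) (hE : IsReducedSolution V T₂₁ E)
    (F : K₁ →L[ℂ] H₂)
    (hF : IsReducedSolution (absPow T₂₂ (1/2)) (ContinuousLinearMap.adjoint T₁₂) F) :
    (∀ u : K₁,
      (WithLp.equiv 2 (K₁ × K₂)).symm (u, 0) ∈ Set.range (blockCLM T₁₁ T₁₂ T₂₁ T₂₂) →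
      u ∈ Set.range (T₁₁ - (ContinuousLinearMap.adjoint F).comp E)) ∧
    (∀ x : H₁,
      (WithLp.equiv 2 (K₁ × K₂)).symm ((T₁₁ - (ContinuousLinearMap.adjoint F).comp E) x, 0) ∈
        closure (Set.range (blockCLM T₁₁ T₁₂ T₂₁ T₂₂))) := by
  classical
  set P := absPow T₂₂ (1/2) with hP
  set Q := absPow (ContinuousLinearMap.adjoint T₂₂) (1/2) with hQ
  have hPsa : ContinuousLinearMap.adjoint P = P := aux_absPow_sa T₂₂ _
  have hPk : ∀ z, P z = 0 ↔ T₂₂ z = 0 := aux_ker T₂₂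
  have hQk : ∀ z, Q z = 0 ↔ ContinuousLinearMap.adjoint T₂₂ z = 0 := aux_ker _
  have hQT : ∀ z, Q (T₂₂ z) = T₂₂ (P z) := fun z => congrArg (fun S => S z) (aux_inter T₂₂)
  have hQV : ∀ z, Q (V z) = T₂₂ z := fun z => congrArg (fun S => S z) hV₁
  have hcl : ∀ w, w ∈ closure (Set.range T₂₂) → Q w = 0 → w = 0 := by
    intro w hw hq
    have h := (aux_closure (ContinuousLinearMap.adjoint T₂₂) w).1
      (by rwa [ContinuousLinearMap.adjoint_adjoint]) w ((hQk w).1 hq)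
    exact inner_self_eq_zero.1 h
  have hVk : ∀ z, V z = 0 ↔ T₂₂ z = 0 := by
    intro z
    constructor
    · intro h
      rw [← hQV, h, map_zero]
    · intro h
      exact hcl _ (hV₂ ⟨z, rfl⟩) (by rw [hQV, h])
  have hVP : ∀ z, V (P z) = T₂₂ z := by
    intro z
    rw [← sub_eq_zero]
    apply hcl
    · have h1 : V (P z) ∈ T₂₂.range.topologicalClosure := hV₂ ⟨P z, rfl⟩
      have h2 : T₂₂ z ∈ T₂₂.range.topologicalClosure := subset_closure ⟨z, rfl⟩
      exact Submodule.sub_mem _ h1 h2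
    · rw [map_sub, hQV, hQT, sub_self]
  have hVE : ∀ x, V (E x) = T₂₁ x := fun x => congrArg (fun S => S x) hE.1
  have hFP : ∀ y, ContinuousLinearMap.adjoint F (P y) = T₁₂ y := by
    have h := congrArg ContinuousLinearMap.adjoint hF.1
    rw [ContinuousLinearMap.adjoint_comp, ContinuousLinearMap.adjoint_adjoint, hPsa] at h
    exact fun y => congrArg (fun S => S y) h
  constructor
  · rintro u ⟨z, hz⟩
    have h1 : T₁₁ z.fst + T₁₂ z.snd = u := congrArg WithLp.fst hz
    have h2 : T₂₁ z.fst + T₂₂ z.snd = 0 := congrArg WithLp.snd hz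
    refine ⟨z.fst, ?_⟩
    have h3 : P (E z.fst + P z.snd) = 0 := by
      rw [hPk, ← hVk, map_add, hVE, hVP, h2]
    have h4 : ContinuousLinearMap.adjoint F (E z.fst + P z.snd) = 0 := by
      apply ext_inner_right ℂ
      intro v
      rw [ContinuousLinearMap.adjoint_inner_left, inner_zero_left]
      exact (aux_closure P (F v)).1 (hF.2 ⟨v, rfl⟩) _ h3
    rw [map_add, hFP] at h4
    rw [← h1, eq_neg_of_add_eq_zero_right h4]
    simp [sub_eq_add_neg]
  · intro x
    have h1 : -E x ∈ closure (Set.range P) := by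
      rw [← hPsa, aux_closure]
      intro z hz
      rw [inner_neg_right, (aux_closure V (E x)).1 (hE.2 ⟨x, rfl⟩) z
        ((hVk z).2 ((hPk z).1 hz)), neg_zero]
    let g : H₂ → WithLp 2 (K₁ × K₂) := fun w =>
      (WithLp.prodContinuousLinearEquiv 2 ℂ K₁ K₂).symm
        (T₁₁ x + ContinuousLinearMap.adjoint F w, T₂₁ x + V w)
    have hg : Continuous g := by fun_prop
    have h2 : g (-E x) = (WithLp.equiv 2 (K₁ × K₂)).symm
        ((T₁₁ - (ContinuousLinearMap.adjoint F).comp E) x, 0) := by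
      simp only [g, map_neg, hVE, ← sub_eq_add_neg, sub_self]
      rfl
    rw [← h2]
    refine map_mem_closure hg h1 ?_
    rintro _ ⟨y, rfl⟩
    refine ⟨WithLp.toLp 2 (x, y), ?_⟩
    simp only [g, hFP, hVP]
    rfl
end
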